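/- For Δ ∈ ℝ² with ‖Δ‖_∞ < 1/2 and any p ∈ ℕ, there exist complex scalars (c_n)_{‖n‖_∞ ≤ 2p} such that: (i) sup_{ω ∈ [-π/2, π/2]²} |e^{iΔ·ω} - Σ_n c_n e^{i n·ω}| ≤ C/p for an absolute constant C, (ii) |Σ_n c_n e^{i n·ω}| ≤ 1 for all ω ∈ ℝ², and (iii) Σ_n |c_n|² ≤ 1. -/

import Mathlib

open Real

open MeasureTheory Complex

/-- Symmetric partial sums of a bilateral series with terms of size at most `1 / (2 n²)`
approximate the sum at rate `1 / N`. -/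
theorem norm_hasSum_sub_sum_Icc_le {a : ℤ → ℂ} {s : ℂ} (hs : HasSum a s)
    (ha : ∀ n : ℤ, n ≠ 0 → ‖a n‖ ≤ 1 / (2 * (n : ℝ) ^ 2)) {N : ℕ} (hN : 1 ≤ N) :
    ‖s - ∑ n ∈ Finset.Icc (-(N : ℤ)) N, a n‖ ≤ 1 / N := by
  have hpartial : ∀ M : ℕ, N ≤ M →
      ‖∑ n ∈ Finset.Icc (-(M : ℤ)) M, a n - ∑ n ∈ Finset.Icc (-(N : ℤ)) N, a n‖
        ≤ 1 / (N : ℝ) - 1 / M := by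
    intro M hM
    induction M, hM using Nat.le_induction with
    | base => simp
    | succ M hM ih =>
      have hM0 : (0 : ℝ) < M := by exact_mod_cast (by omega : 0 < M)
      have hset : Finset.Icc (-((M + 1 : ℕ) : ℤ)) ((M + 1 : ℕ) : ℤ) =
          insert (((M + 1 : ℕ) : ℤ)) (insert (-((M + 1 : ℕ) : ℤ)) (Finset.Icc (-(M : ℤ)) M)) := by
        ext x; simp only [Finset.mem_Icc, Finset.mem_insert]; omega
      rw [hset, Finset.sum_insert (by simp; omega), Finset.sum_insert (by simp)]
      have h₁ := ha ((M + 1 : ℕ) : ℤ) (by omega)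
      have h₂ := ha (-((M + 1 : ℕ) : ℤ)) (by omega)
      have hstep : 1 / (2 * ((M : ℝ) + 1) ^ 2) + 1 / (2 * ((M : ℝ) + 1) ^ 2)
          ≤ 1 / (M : ℝ) - 1 / ((M : ℝ) + 1) := by
        have : 1 / (M : ℝ) - 1 / ((M : ℝ) + 1)
            - (1 / (2 * ((M : ℝ) + 1) ^ 2) + 1 / (2 * ((M : ℝ) + 1) ^ 2))
            = 1 / (M * ((M : ℝ) + 1) ^ 2) := by
          field_simp; ring
        have : 0 ≤ 1 / (M * ((M : ℝ) + 1) ^ 2) := by positivity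
        linarith
      push_cast at h₁ h₂ ⊢
      rw [neg_sq] at h₂
      rw [add_sub_assoc, add_sub_assoc]
      refine (norm_add_le _ _).trans ?_
      grw [norm_add_le]
      linarith
  have hlim : Filter.Tendsto (fun M : ℕ ↦ ∑ n ∈ Finset.Icc (-(M : ℤ)) M, a n) Filter.atTop
      (nhds s) := hs.comp Finset.tendsto_Icc_neg
  refine le_of_tendsto (hlim.sub_const _).norm ?_
  filter_upwards [Filter.eventually_ge_atTop N] with M hM
  exact (hpartial M hM).trans (by simp)

/-- Bessel's inequality for a continuous function bounded by one. -/
theorem sum_sq_fourierCoeff_le_one {T : ℝ} [Fact (0 < T)] (f : C(AddCircle T, ℂ))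
    (hf : ∀ x, ‖f x‖ ≤ 1) (s : Finset ℤ) : ∑ n ∈ s, ‖fourierCoeff f n‖ ^ 2 ≤ 1 := by
  have h := hasSum_sq_fourierCoeff (ContinuousMap.toLp 2 (@AddCircle.haarAddCircle T _) ℂ f)
  simp_rw [fourierCoeff_toLp] at h
  refine (sum_le_hasSum s (fun _ _ ↦ by positivity) h).trans ?_
  have hbound : ∀ᵐ t ∂(@AddCircle.haarAddCircle T _),
      ‖‖ContinuousMap.toLp 2 (@AddCircle.haarAddCircle T _) ℂ f t‖ ^ 2‖ ≤ 1 := by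
    filter_upwards [ContinuousMap.coeFn_toLp (p := 2) (𝕜 := ℂ) (@AddCircle.haarAddCircle T _) f]
      with t ht
    rw [ht, norm_pow, norm_norm]
    exact pow_le_one₀ (norm_nonneg _) (hf t)
  have := norm_integral_le_of_norm_le_const hbound
  simpa using (le_abs_self _).trans this

instance fact_two_pi_pos : Fact (0 < 2 * π) := ⟨Real.two_pi_pos⟩

/-- The `2π`-periodic extension of `ω ↦ exp (i δ ω)` from `[-π/2, π/2]`, by reflection. -/
noncomputable def foldedWave (δ : ℝ) : C(AddCircle (2 * π), ℂ) where
  toFun := Function.Periodic.lift (f := fun ω : ℝ ↦ cexp (I * (δ * Real.arcsin (Real.sin ω))))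
    (c := 2 * π) (fun ω ↦ by simp)
  continuous_toFun := by
    refine continuous_coinduced_dom.mpr ?_
    change Continuous fun ω : ℝ ↦ cexp (I * (δ * Real.arcsin (Real.sin ω)))
    fun_prop

theorem foldedWave_coe (δ ω : ℝ) :
    foldedWave δ (ω : AddCircle (2 * π)) = cexp (I * (δ * Real.arcsin (Real.sin ω))) := rfl

theorem norm_foldedWave (δ : ℝ) (x : AddCircle (2 * π)) : ‖foldedWave δ x‖ = 1 := by
  induction x using QuotientAddGroup.induction_on with
  | H ω =>
    refine (congrArg norm (foldedWave_coe δ ω)).trans ?_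
    rw [← ofReal_mul, mul_comm, norm_exp_ofReal_mul_I]

theorem fourier_two_pi_coe (n : ℤ) (ω : ℝ) :
    fourier n (ω : AddCircle (2 * π)) = cexp (I * (n * ω)) := by
  rw [fourier_coe_apply]
  congr 1
  have : (π : ℂ) ≠ 0 := by exact_mod_cast Real.pi_ne_zero
  push_cast
  field_simp

theorem integral_cexp_neg_pi_div_two {α : ℝ} (hα : α ≠ 0) :
    ∫ x in (-(π / 2))..(π / 2), cexp (I * α * x) = (2 * Real.sin (α * (π / 2)) / α : ℝ) := by
  have hα' : (α : ℂ) ≠ 0 := by exact_mod_cast hα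
  rw [integral_exp_mul_complex (mul_ne_zero I_ne_zero hα')]
  push_cast
  rw [Complex.sin]
  field_simp
  rw [I_sq]
  ring_nf

theorem fourierCoeff_foldedWave {δ : ℝ} {n : ℤ} (h₁ : δ - n ≠ 0) (h₂ : δ + n ≠ 0) :
    fourierCoeff (foldedWave δ) n =
      (2 * δ * Real.sin ((δ - n) * (π / 2)) / (π * ((δ - n) * (δ + n))) : ℝ) := by
  have hcont : Continuous fun x : ℝ ↦
      fourier (-n) (x : AddCircle (2 * π)) • foldedWave δ (x : AddCircle (2 * π)) := by
    have hq : Continuous ((↑) : ℝ → AddCircle (2 * π)) := AddCircle.continuous_mk' _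
    exact ((fourier (-n)).continuous.comp hq).smul ((foldedWave δ).continuous.comp hq)
  have hleft : ∫ x in (-(π / 2))..(π / 2),
      fourier (-n) (x : AddCircle (2 * π)) • foldedWave δ (x : AddCircle (2 * π)) =
      (2 * Real.sin ((δ - n) * (π / 2)) / (δ - n) : ℝ) := by
    rw [← integral_cexp_neg_pi_div_two h₁]
    refine intervalIntegral.integral_congr fun x hx ↦ ?_
    rw [Set.uIcc_of_le (by linarith [Real.pi_pos])] at hx
    simp only [smul_eq_mul]
    rw [fourier_two_pi_coe, foldedWave_coe, Real.arcsin_sin hx.1 hx.2, ← Complex.exp_add]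
    push_cast
    ring_nf
  have hright : ∫ x in (π / 2)..(-(π / 2) + 2 * π),
      fourier (-n) (x : AddCircle (2 * π)) • foldedWave δ (x : AddCircle (2 * π)) =
      (2 * Real.sin ((δ - n) * (π / 2)) / (δ + n) : ℝ) := by
    have hsin : Real.sin ((δ + n) * (π / 2)) = (-1) ^ n * Real.sin ((δ - n) * (π / 2)) := by
      rw [← Real.sin_add_int_mul_pi]
      ring_nf
    have hexp : cexp (I * (((-n : ℤ) : ℂ) * π)) = (((-1 : ℝ) ^ n : ℝ) : ℂ) := by
      rw [mul_comm, ← ofReal_intCast, ← ofReal_mul, exp_mul_I, ← ofReal_cos, ← ofReal_sin,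
        Real.cos_int_mul_pi, Real.sin_int_mul_pi]
      simp [← inv_zpow, inv_neg]
    have hsq : ((-1 : ℝ) ^ n) * (-1) ^ n = 1 := by
      rw [← mul_zpow]; simp
    have hval : (2 * Real.sin ((δ - n) * (π / 2)) / (δ + n) : ℝ) =
        (-1) ^ n * (2 * Real.sin ((δ + n) * (π / 2)) / (δ + n)) := by
      rw [hsin]
      linear_combination (-(2 * Real.sin ((δ - n) * (π / 2)) / (δ + n))) * hsq
    have hreflect : ∫ x in (π / 2)..(-(π / 2) + 2 * π),
        fourier (-n) (x : AddCircle (2 * π)) • foldedWave δ (x : AddCircle (2 * π)) =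
        ∫ x in (-(π / 2))..(π / 2), fourier (-n) ((π - x : ℝ) : AddCircle (2 * π)) •
          foldedWave δ ((π - x : ℝ) : AddCircle (2 * π)) := by
      rw [intervalIntegral.integral_comp_sub_left (fun x : ℝ ↦
        fourier (-n) (x : AddCircle (2 * π)) • foldedWave δ (x : AddCircle (2 * π)))]
      congr 1 <;> ring
    rw [hreflect, hval, ofReal_mul, ← integral_cexp_neg_pi_div_two h₂, ← hexp,
      ← intervalIntegral.integral_const_mul]
    refine intervalIntegral.integral_congr fun x hx ↦ ?_
    rw [Set.uIcc_of_le (by linarith [Real.pi_pos])] at hx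
    simp only [smul_eq_mul]
    rw [fourier_two_pi_coe, foldedWave_coe, Real.sin_pi_sub, Real.arcsin_sin hx.1 hx.2,
      ← Complex.exp_add, ← Complex.exp_add]
    push_cast
    ring_nf
  rw [fourierCoeff_eq_intervalIntegral _ _ (-(π / 2)),
    ← intervalIntegral.integral_add_adjacent_intervals
      (hcont.intervalIntegrable _ (π / 2)) (hcont.intervalIntegrable _ _),
    hleft, hright, ← ofReal_add, real_smul, ← ofReal_mul]
  congr 1
  have := Real.pi_ne_zero
  field_simp
  ring

theorem norm_fourierCoeff_foldedWave_le {δ : ℝ} (hδ : |δ| < 1 / 2) {n : ℤ} (hn : n ≠ 0) :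
    ‖fourierCoeff (foldedWave δ) n‖ ≤ 1 / (2 * (n : ℝ) ^ 2) := by
  have hn1 : (1 : ℝ) ≤ (n : ℝ) ^ 2 := by
    exact_mod_cast Int.add_one_le_of_lt (pow_pos (abs_pos.mpr hn) 2 |>.trans_eq (sq_abs n))
  have hδ2 : δ ^ 2 < 1 / 4 := by
    have := sq_lt_sq' (neg_lt_of_abs_lt hδ) (lt_of_abs_lt hδ)
    linarith
  have hprod : (δ - n) * (δ + n) = -((n : ℝ) ^ 2 - δ ^ 2) := by ring
  have hne : (δ - n) * (δ + n) ≠ 0 := by rw [hprod]; linarith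
  rw [fourierCoeff_foldedWave (left_ne_zero_of_mul hne) (right_ne_zero_of_mul hne), norm_real,
    hprod, Real.norm_eq_abs, abs_div, abs_mul, abs_mul, abs_mul, abs_neg,
    abs_of_pos Real.pi_pos, abs_of_pos (show 0 < (n : ℝ) ^ 2 - δ ^ 2 by linarith), abs_two,
    div_le_div_iff₀ (mul_pos Real.pi_pos (by linarith)) (by linarith)]
  have hsin := Real.abs_sin_le_one ((δ - n) * (π / 2))
  have hnum : 2 * |δ| * |Real.sin ((δ - n) * (π / 2))| ≤ 1 := by
    nlinarith [abs_nonneg δ]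
  have hpi : 3 * ((n : ℝ) ^ 2 - δ ^ 2) ≤ π * ((n : ℝ) ^ 2 - δ ^ 2) :=
    mul_le_mul_of_nonneg_right Real.pi_gt_three.le (by linarith)
  nlinarith

/-- One-dimensional approximation of the plane wave by trigonometric polynomials of degree `N`. -/
theorem exists_trigPoly_approx {δ : ℝ} (hδ : |δ| < 1 / 2) {N : ℕ} (hN : 1 ≤ N) :
    ∃ c : ℤ → ℂ,
      (∀ ω ∈ Set.Icc (-(π / 2)) (π / 2), ‖cexp (I * (δ * ω)) -
        ∑ n ∈ Finset.Icc (-(N : ℤ)) N, c n * cexp (I * ((n : ℝ) * ω))‖ ≤ 2 / N) ∧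
      (∀ ω : ℝ, ‖∑ n ∈ Finset.Icc (-(N : ℤ)) N, c n * cexp (I * ((n : ℝ) * ω))‖ ≤ 1) ∧
      ∑ n ∈ Finset.Icc (-(N : ℤ)) N, ‖c n‖ ^ 2 ≤ 1 := by
  have hN0 : (0 : ℝ) < N := by exact_mod_cast hN
  have hsummable : Summable (fourierCoeff (foldedWave δ)) := by
    refine Summable.of_norm_bounded_eventually
      (g := fun n : ℤ ↦ 1 / 2 * (1 / (n : ℝ) ^ 2))
      ((Real.summable_one_div_int_pow.mpr one_lt_two).mul_left _) ?_
    rw [Filter.eventually_cofinite]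
    refine (Set.finite_singleton (0 : ℤ)).subset fun n hn ↦ ?_
    by_contra h
    exact hn ((norm_fourierCoeff_foldedWave_le hδ h).trans_eq (by field_simp))
  set b := fourierCoeff (foldedWave δ)
  set S : ℝ → ℂ := fun ω ↦ ∑ n ∈ Finset.Icc (-(N : ℤ)) N, b n * cexp (I * ((n : ℝ) * ω)) with hS
  have hclose : ∀ ω : ℝ, ‖foldedWave δ (ω : AddCircle (2 * π)) - S ω‖ ≤ 1 / N := by
    intro ω
    have h := has_pointwise_sum_fourier_series_of_summable hsummable (ω : AddCircle (2 * π))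
    have h' := norm_hasSum_sub_sum_Icc_le h (fun n hn ↦ ?_) hN
    · simpa only [fourier_two_pi_coe, smul_eq_mul, hS, ofReal_intCast] using h'
    · rw [norm_smul, fourier_apply, Circle.norm_coe, mul_one]
      exact norm_fourierCoeff_foldedWave_le hδ hn
  have hSle : ∀ ω, ‖S ω‖ ≤ 1 + 1 / N := by
    intro ω
    have h₁ := norm_sub_norm_le (S ω) (foldedWave δ (ω : AddCircle (2 * π)))
    rw [norm_sub_rev, norm_foldedWave] at h₁
    linarith [hclose ω]
  set r : ℝ := (1 + 1 / N)⁻¹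
  have hd : (0 : ℝ) < 1 + 1 / N := by positivity
  have hr0 : 0 < r := by positivity
  have hr1 : r ≤ 1 := inv_le_one_of_one_le₀ (by simp)
  have hrd : r * (1 + 1 / N) = 1 := inv_mul_cancel₀ hd.ne'
  have hsum : ∀ ω : ℝ,
      ∑ n ∈ Finset.Icc (-(N : ℤ)) N, (r * b n) * cexp (I * ((n : ℝ) * ω)) = r * S ω := by
    intro ω
    simp only [hS, Finset.mul_sum, mul_assoc]
  refine ⟨fun n ↦ r * b n, fun ω hω ↦ ?_, fun ω ↦ ?_, ?_⟩
  · rw [hsum]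
    have hwave := foldedWave_coe δ ω
    rw [Real.arcsin_sin hω.1 hω.2] at hwave
    rw [← hwave]
    have hsplit : foldedWave δ (ω : AddCircle (2 * π)) - r * S ω =
        (foldedWave δ (ω : AddCircle (2 * π)) - S ω) + ((1 - r : ℝ) : ℂ) * S ω := by
      push_cast; ring
    rw [hsplit]
    grw [norm_add_le, hclose, norm_mul, norm_real, hSle]
    rw [Real.norm_of_nonneg (by linarith)]
    have : (1 - r) * (1 + 1 / N) = 1 / N := by linear_combination -hrd
    rw [this]
    exact le_of_eq (by ring)
  · rw [hsum, norm_mul, norm_real, Real.norm_of_nonneg hr0.le, ← hrd]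
    exact mul_le_mul_of_nonneg_left (hSle ω) hr0.le
  · refine (Finset.sum_le_sum fun n _ ↦ ?_).trans
      (sum_sq_fourierCoeff_le_one (foldedWave δ) (fun x ↦ (norm_foldedWave δ x).le) _)
    rw [norm_mul, norm_real, Real.norm_of_nonneg hr0.le]
    exact pow_le_pow_left₀ (by positivity) (mul_le_of_le_one_left (norm_nonneg _) hr1) 2


/-- Approximation of an off-grid plane wave by trigonometric polynomials: for
`‖Δ‖_∞ < 1/2` and `p ∈ ℕ`, there are complex scalars `(c_n)_{‖n‖_∞ ≤ 2p}` with
(i) `sup_{ω ∈ [-π/2,π/2]²} |e^{iΔ·ω} - Σ_n c_n e^{i n·ω}| ≤ C/p` for an absolute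
constant `C`, (ii) `|Σ_n c_n e^{i n·ω}| ≤ 1` everywhere, and (iii) `Σ_n |c_n|² ≤ 1`. -/
theorem stmt_7 :
    ∃ C : ℝ, 0 < C ∧ ∀ (p : ℕ), 1 ≤ p → ∀ Δ : ℝ × ℝ, |Δ.1| < 1 / 2 → |Δ.2| < 1 / 2 →
      ∃ c : ℤ × ℤ → ℂ,
        (∀ ω : ℝ × ℝ, ω.1 ∈ Set.Icc (-(π / 2)) (π / 2) →
          ω.2 ∈ Set.Icc (-(π / 2)) (π / 2) →
          ‖Complex.exp (Complex.I * (Δ.1 * ω.1 + Δ.2 * ω.2)) -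
            ∑ n ∈ Finset.Icc (-(2 * p : ℤ), -(2 * p : ℤ)) ((2 * p : ℤ), (2 * p : ℤ)),
              c n * Complex.exp (Complex.I * ((n.1 : ℝ) * ω.1 + (n.2 : ℝ) * ω.2))‖
            ≤ C / p) ∧
        (∀ ω : ℝ × ℝ,
          ‖∑ n ∈ Finset.Icc (-(2 * p : ℤ), -(2 * p : ℤ)) ((2 * p : ℤ), (2 * p : ℤ)),
              c n * Complex.exp (Complex.I * ((n.1 : ℝ) * ω.1 + (n.2 : ℝ) * ω.2))‖ ≤ 1) ∧
        (∑ n ∈ Finset.Icc (-(2 * p : ℤ), -(2 * p : ℤ)) ((2 * p : ℤ), (2 * p : ℤ)),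
          ‖c n‖ ^ 2 ≤ 1) := by

  refine ⟨2, two_pos, fun p hp Δ h₁ h₂ ↦ ?_⟩
  obtain ⟨c, hc, hc1, hc2⟩ := exists_trigPoly_approx h₁ (N := 2 * p) (by omega)
  obtain ⟨d, hd, hd1, hd2⟩ := exists_trigPoly_approx h₂ (N := 2 * p) (by omega)
  push_cast at hc hc1 hc2 hd hd1 hd2
  have hsum : ∀ ω : ℝ × ℝ,
      ∑ n ∈ Finset.Icc (-(2 * p : ℤ), -(2 * p : ℤ)) ((2 * p : ℤ), (2 * p : ℤ)),
        c n.1 * d n.2 * cexp (I * ((n.1 : ℝ) * ω.1 + (n.2 : ℝ) * ω.2)) =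
      (∑ n ∈ Finset.Icc (-(2 * p : ℤ)) (2 * p), c n * cexp (I * (n * ω.1))) *
        ∑ n ∈ Finset.Icc (-(2 * p : ℤ)) (2 * p), d n * cexp (I * (n * ω.2)) := by
    intro ω
    rw [Finset.sum_mul_sum, ← Finset.sum_product', Finset.Icc_prod_def]
    refine Finset.sum_congr rfl fun n _ ↦ ?_
    rw [mul_add, Complex.exp_add]
    push_cast
    ring
  refine ⟨fun n ↦ c n.1 * d n.2, fun ω hω₁ hω₂ ↦ ?_, fun ω ↦ ?_, ?_⟩
  · rw [hsum, mul_add, Complex.exp_add]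
    have e₁ := hc ω.1 hω₁
    have e₂ := hd ω.2 hω₂
    have b₂ := hd1 ω.2
    set S := ∑ n ∈ Finset.Icc (-(2 * p : ℤ)) (2 * p), c n * cexp (I * (n * ω.1))
    set R := ∑ n ∈ Finset.Icc (-(2 * p : ℤ)) (2 * p), d n * cexp (I * (n * ω.2))
    have hsplit : cexp (I * (Δ.1 * ω.1)) * cexp (I * (Δ.2 * ω.2)) - S * R =
        cexp (I * (Δ.1 * ω.1)) * (cexp (I * (Δ.2 * ω.2)) - R) +
          (cexp (I * (Δ.1 * ω.1)) - S) * R := by ring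
    have hunit : ‖cexp (I * (Δ.1 * ω.1))‖ = 1 := by
      rw [← ofReal_mul, mul_comm, norm_exp_ofReal_mul_I]
    rw [hsplit]
    grw [norm_add_le, norm_mul, norm_mul, hunit, e₁, e₂, b₂]
    exact le_of_eq (by field_simp; norm_num)
  · rw [hsum, norm_mul]
    exact mul_le_one₀ (hc1 ω.1) (norm_nonneg _) (hd1 ω.2)
  · rw [Finset.Icc_prod_def]
    simp only [norm_mul, mul_pow]
    rw [Finset.sum_product' (f := fun m n ↦ ‖c m‖ ^ 2 * ‖d n‖ ^ 2), ← Finset.sum_mul_sum]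
    exact mul_le_one₀ hc2 (Finset.sum_nonneg fun _ _ ↦ by positivity) hd2
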